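/- arXiv:2302.01306 — 2 statements merged into one kernel-verified Lean document; each statement's English description precedes it below -/
import Mathlib

section
/- For every integer n ≥ 3, the graph G_n satisfies z(G_n) = χ(G_n) = n, where z denotes the z-chromatic number and χ the chromatic number. -/
open SimpleGraph

universe u v

/-- `c` is a z-coloring of `G` using exactly the `k` colors `0, …, k-1`:
it is proper, every color class is nonempty, every vertex of color `j` has a
neighbor of each color `i < j` (Grundy property), and there are vertices
`u 0, …, u (k-1)` with `u j` of color `j`, such that `u (k-1)` is adjacent to
every other `u j`, and each `u j` has a neighbor of every color `i ≠ j`. -/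
def IsZColoring {V : Type u} (G : SimpleGraph V) (k : ℕ) (c : V → ℕ) : Prop :=
  (∀ v, c v < k) ∧
  (∀ ⦃x y : V⦄, G.Adj x y → c x ≠ c y) ∧
  (∀ i, i < k → ∃ v, c v = i) ∧
  (∀ v : V, ∀ i, i < c v → ∃ w, G.Adj v w ∧ c w = i) ∧
  (∃ u : ℕ → V,
    (∀ j, j < k → c (u j) = j) ∧
    (∀ j, j < k - 1 → G.Adj (u (k - 1)) (u j)) ∧
    (∀ i, i < k → ∀ j, j < k → i ≠ j → ∃ w, G.Adj (u j) w ∧ c w = i))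

/-- The z-chromatic number: the maximum number of colors in a z-coloring. -/
noncomputable def zNum {V : Type u} (G : SimpleGraph V) : ℕ :=
  sSup {k | ∃ c : V → ℕ, IsZColoring G k c}

/-- `c` is a Grundy coloring of `G` using exactly the `k` colors `0, …, k-1`. -/
def IsGrundyColoring {V : Type u} (G : SimpleGraph V) (k : ℕ) (c : V → ℕ) : Prop :=
  (∀ v, c v < k) ∧
  (∀ ⦃x y : V⦄, G.Adj x y → c x ≠ c y) ∧
  (∀ i, i < k → ∃ v, c v = i) ∧
  (∀ v : V, ∀ i, i < c v → ∃ w, G.Adj v w ∧ c w = i)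

/-- The Grundy number: the maximum number of colors in a Grundy coloring. -/
noncomputable def grundyNum {V : Type u} (G : SimpleGraph V) : ℕ :=
  sSup {k | ∃ c : V → ℕ, IsGrundyColoring G k c}

/-- `c` is a b-coloring of `G` using exactly the `k` colors `0, …, k-1`:
proper, and every color class contains a vertex adjacent to a vertex of every
other color class. -/
def IsBColoring {V : Type u} (G : SimpleGraph V) (k : ℕ) (c : V → ℕ) : Prop :=
  (∀ v, c v < k) ∧
  (∀ ⦃x y : V⦄, G.Adj x y → c x ≠ c y) ∧
  (∀ i, i < k → ∃ v, c v = i ∧ ∀ j, j < k → j ≠ i → ∃ w, G.Adj v w ∧ c w = j)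

/-- The b-chromatic number: the maximum number of colors in a b-coloring. -/
noncomputable def bNum {V : Type u} (G : SimpleGraph V) : ℕ :=
  sSup {k | ∃ c : V → ℕ, IsBColoring G k c}

/-- The chromatic number, as a natural number. -/
noncomputable def chromNum {V : Type u} (G : SimpleGraph V) : ℕ :=
  sInf {k | G.Colorable k}

/-- The maximum degree of a graph (degree measured by `Set.ncard` of the
neighbor set), as the supremum of all achieved degrees. -/
noncomputable def maxDeg {V : Type u} (G : SimpleGraph V) : ℕ :=
  sSup {d | ∃ v : V, (G.neighborSet v).ncard = d}

/-- Vertex set of the graph `Gₙ`: for each `i : Fin n` we have the core vertex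
`(i, Sum.inl ())` (this is `vᵢ = vₙⁱ`), the `n-1` further clique vertices
`(i, Sum.inr (Sum.inl j))` of `K(vᵢ)` (with `j = 0` being `v₁ⁱ`), and the
`n-1` pendant leaves `(i, Sum.inr (Sum.inr l))` attached to `v₁ⁱ`. -/
abbrev GnVert (n : ℕ) : Type := Fin n × (Unit ⊕ (Fin (n - 1) ⊕ Fin (n - 1)))

/-- The graph `Gₙ`: a complete graph `Kₙ` on the core vertices `v₁, …, vₙ`;
for each `i` a complete graph `K(vᵢ)` on `n` vertices containing `vᵢ`;
and `n - 1` pendant leaves attached to the vertex `v₁ⁱ` of each `K(vᵢ)`. -/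
def Gn (n : ℕ) : SimpleGraph (GnVert n) :=
  SimpleGraph.fromRel (fun x y =>
    -- the central clique on the `n` core vertices
    (x.1 ≠ y.1 ∧ x.2 = Sum.inl () ∧ y.2 = Sum.inl ()) ∨
    -- the clique `K(vᵢ)` on the core vertex together with the `n-1` others
    (x.1 = y.1 ∧
      (x.2 = Sum.inl () ∨ ∃ j, x.2 = Sum.inr (Sum.inl j)) ∧
      (y.2 = Sum.inl () ∨ ∃ j, y.2 = Sum.inr (Sum.inl j))) ∨
    -- the pendant leaves attached to `v₁ⁱ`
    (x.1 = y.1 ∧ (∃ j : Fin (n - 1), x.2 = Sum.inr (Sum.inl j) ∧ (j : ℕ) = 0) ∧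
      (∃ l, y.2 = Sum.inr (Sum.inr l))))

lemma adj_cc {n : ℕ} (i j : Fin n) :
    (Gn n).Adj (i, Sum.inl ()) (j, Sum.inl ()) ↔ i ≠ j := by
  simp [Gn, SimpleGraph.fromRel_adj]; grind

lemma adj_ck {n : ℕ} (i j : Fin n) (a : Fin (n - 1)) :
    (Gn n).Adj (i, Sum.inl ()) (j, Sum.inr (Sum.inl a)) ↔ i = j := by
  simp [Gn, SimpleGraph.fromRel_adj]; grind

lemma adj_cl {n : ℕ} (i j : Fin n) (a : Fin (n - 1)) :
    ¬ (Gn n).Adj (i, Sum.inl ()) (j, Sum.inr (Sum.inr a)) := by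
  simp [Gn, SimpleGraph.fromRel_adj]

lemma adj_kk {n : ℕ} (i j : Fin n) (a b : Fin (n - 1)) :
    (Gn n).Adj (i, Sum.inr (Sum.inl a)) (j, Sum.inr (Sum.inl b)) ↔ i = j ∧ a ≠ b := by
  simp [Gn, SimpleGraph.fromRel_adj]; grind

lemma adj_kl {n : ℕ} (i j : Fin n) (a b : Fin (n - 1)) :
    (Gn n).Adj (i, Sum.inr (Sum.inl a)) (j, Sum.inr (Sum.inr b)) ↔ i = j ∧ (a : ℕ) = 0 := by
  simp [Gn, SimpleGraph.fromRel_adj]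

lemma adj_ll {n : ℕ} (i j : Fin n) (a b : Fin (n - 1)) :
    ¬ (Gn n).Adj (i, Sum.inr (Sum.inr a)) (j, Sum.inr (Sum.inr b)) := by
  simp [Gn, SimpleGraph.fromRel_adj]

lemma adj_kc {n : ℕ} (i j : Fin n) (a : Fin (n - 1)) :
    (Gn n).Adj (j, Sum.inr (Sum.inl a)) (i, Sum.inl ()) ↔ i = j := by
  rw [SimpleGraph.adj_comm, adj_ck]

lemma adj_lc {n : ℕ} (i j : Fin n) (a : Fin (n - 1)) :
    ¬ (Gn n).Adj (j, Sum.inr (Sum.inr a)) (i, Sum.inl ()) := by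
  rw [SimpleGraph.adj_comm]; exact adj_cl _ _ _

lemma adj_lk {n : ℕ} (i j : Fin n) (a b : Fin (n - 1)) :
    (Gn n).Adj (j, Sum.inr (Sum.inr b)) (i, Sum.inr (Sum.inl a)) ↔ i = j ∧ (a : ℕ) = 0 := by
  rw [SimpleGraph.adj_comm, adj_kl]

/-- the extremal coloring -/
def zcol (n : ℕ) : GnVert n → ℕ
  | (i, Sum.inl _) => i
  | (i, Sum.inr (Sum.inl a)) => if (a : ℕ) = i then n - 1 else a
  | (i, Sum.inr (Sum.inr _)) => if (i : ℕ) = 0 then 0 else 1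

lemma zcol_lt (n : ℕ) (hn : 3 ≤ n) (v : GnVert n) : zcol n v < n := by
  obtain ⟨i, (_ | a | a)⟩ := v <;> simp only [zcol] <;> grind

lemma zcol_proper (n : ℕ) (hn : 3 ≤ n) (x y : GnVert n) (h : (Gn n).Adj x y) :
    zcol n x ≠ zcol n y := by
  obtain ⟨i, (⟨⟩ | a | a)⟩ := x <;> obtain ⟨j, (⟨⟩ | b | b)⟩ := y <;>
    first
      | exact absurd h (adj_cl _ _ _)
      | exact absurd h (adj_lc _ _ _)
      | exact absurd h (adj_ll _ _ _ _)
      | (have h := (adj_cc _ _).1 h; simp only [zcol]; grind)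
      | (have h := (adj_ck _ _ _).1 h; simp only [zcol]; grind)
      | (have h := (adj_kc _ _ _).1 h; simp only [zcol]; grind)
      | (have h := (adj_kk _ _ _ _).1 h; simp only [zcol]; grind)
      | (have h := (adj_kl _ _ _ _).1 h; simp only [zcol]; grind)
      | (have h := (adj_lk _ _ _ _).1 h; simp only [zcol]; grind)

lemma zcol_core (n : ℕ) (i : Fin n) (t : ℕ) (ht : t < n) (hti : t ≠ i) :
    ∃ w, (Gn n).Adj (i, Sum.inl ()) w ∧ zcol n w = t :=
  ⟨(⟨t, ht⟩, Sum.inl ()), by rw [adj_cc]; grind, rfl⟩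

lemma zcol_grundy (n : ℕ) (hn : 3 ≤ n) (v : GnVert n) (t : ℕ) (ht : t < zcol n v) :
    ∃ w, (Gn n).Adj v w ∧ zcol n w = t := by
  have hlt := zcol_lt n hn v
  obtain ⟨i, (_ | a | a)⟩ := v
  · exact zcol_core n i t (by omega) (by simp only [zcol] at ht; omega)
  · by_cases h1 : t = i
    · exact ⟨(i, Sum.inl ()), by rw [adj_kc], h1.symm⟩
    · have h2 : t < n - 1 := by omega
      refine ⟨(i, Sum.inr (Sum.inl ⟨t, h2⟩)), ?_, ?_⟩
      · rw [adj_kk]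
        refine ⟨rfl, ?_⟩
        rintro rfl
        simp [zcol, h1] at ht
      · simp [zcol, h1]
  · simp only [zcol] at ht
    refine ⟨(i, Sum.inr (Sum.inl ⟨0, by omega⟩)), ?_, ?_⟩
    · rw [adj_lk]; simp
    · simp only [zcol]; grind

lemma zcol_isZ (n : ℕ) (hn : 3 ≤ n) : IsZColoring (Gn n) n (zcol n) := by
  refine ⟨zcol_lt n hn, zcol_proper n hn, ?_, zcol_grundy n hn, ?_⟩
  · intro i hi
    exact ⟨(⟨i, hi⟩, Sum.inl ()), rfl⟩
  · have h0 : 0 < n := by omega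
    refine ⟨fun j => (⟨j % n, Nat.mod_lt _ h0⟩, Sum.inl ()), ?_, ?_, ?_⟩
    · intro j hj
      simp [zcol, Nat.mod_eq_of_lt hj]
    · intro j hj
      rw [adj_cc]
      intro h
      have h' := congrArg Fin.val h
      simp only at h'
      rw [Nat.mod_eq_of_lt (by omega), Nat.mod_eq_of_lt (by omega)] at h'
      omega
    · intro i hi j hj hij
      exact zcol_core n _ i hi (by simpa [Nat.mod_eq_of_lt hj] using hij)

/-- colors appearing on the clique at `i` -/
def clq (n : ℕ) (c : GnVert n → ℕ) (i : Fin n) : Finset ℕ :=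
  insert (c (i, Sum.inl ())) (Finset.univ.image fun a : Fin (n - 1) => c (i, Sum.inr (Sum.inl a)))

lemma clq_card (n : ℕ) (hn : 3 ≤ n) (c : GnVert n → ℕ) (i : Fin n) : (clq n c i).card ≤ n := by
  have h1 := Finset.card_insert_le (c (i, Sum.inl ()))
    (Finset.univ.image fun a : Fin (n - 1) => c (i, Sum.inr (Sum.inl a)))
  have h2 := Finset.card_image_le (s := Finset.univ)
    (f := fun a : Fin (n - 1) => c (i, Sum.inr (Sum.inl a)))
  simp only [Finset.card_univ, Fintype.card_fin] at h2
  unfold clq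
  omega

lemma clq_c (n : ℕ) (c : GnVert n → ℕ) (i : Fin n) : c (i, Sum.inl ()) ∈ clq n c i := by
  simp [clq]

lemma clq_k (n : ℕ) (c : GnVert n → ℕ) (i : Fin n) (a : Fin (n - 1)) :
    c (i, Sum.inr (Sum.inl a)) ∈ clq n c i := by
  simp [clq]

lemma clq_big (n : ℕ) (hn : 3 ≤ n) (c : GnVert n → ℕ) (i : Fin n) (k : ℕ) (hk : n < k)
    (h : ∀ t < k, t ∈ clq n c i) : False := by
  have h1 : Finset.range k ⊆ clq n c i := fun t ht => h t (Finset.mem_range.1 ht)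
  have h2 := Finset.card_le_card h1
  have := clq_card n hn c i
  simp at h2
  omega

lemma z_le (n : ℕ) (hn : 3 ≤ n) (k : ℕ) (c : GnVert n → ℕ) (h : IsZColoring (Gn n) k c) :
    k ≤ n := by
  obtain ⟨hlt, hp, -, hg, u, hu, -, hb⟩ := h
  by_contra! hk
  have hz : 0 < n - 1 := by omega
  -- some `u j` is not a core vertex
  have h1 : ∃ j < k, ∀ i, u j ≠ (i, Sum.inl ()) := by
    by_contra! hc
    have : Nonempty (Fin n) := ⟨⟨0, by omega⟩⟩
    choose! f hf using hc
    have : Set.InjOn f (Finset.range k : Set ℕ) := by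
      intro a ha b hb hab
      simp only [Finset.coe_range, Set.mem_Iio] at ha hb
      rw [← hu a ha, ← hu b hb, hf a ha, hf b hb, hab]
    have h2 := Finset.card_le_card_of_injOn (t := Finset.univ) f (by simp) this
    simp at h2
    omega
  obtain ⟨j, hj, hjc⟩ := h1
  have hcj := hu j hj
  have hbj : ∀ t < k, t ≠ j → ∃ w, (Gn n).Adj (u j) w ∧ c w = t := fun t ht htj => hb t ht j hj htj
  rcases hv : u j with ⟨i, (_ | a | a)⟩
  · exact hjc i hv
  · rw [hv] at hcj hbj
    by_cases ha : (a : ℕ) = 0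
    · -- all the leaves have the same color
      obtain ⟨r, hr⟩ : ∃ r, r = if j = 0 then 1 else 0 := ⟨_, rfl⟩
      have hleaf : ∀ l, c (i, Sum.inr (Sum.inr l)) = r := by
        intro l
        have hne : c (i, Sum.inr (Sum.inr l)) ≠ j := by
          rw [← hcj]; exact hp ((adj_lk _ _ _ _).2 ⟨rfl, ha⟩)
        have hgl : ∀ t < c (i, Sum.inr (Sum.inr l)), t = j := by
          intro t ht
          obtain ⟨⟨i', (⟨⟩ | b | b)⟩, hw, hwt⟩ := hg _ t ht
          · exact absurd hw (adj_lc _ _ _)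
          · rw [adj_lk] at hw
            obtain ⟨rfl, hb0⟩ := hw
            have : b = a := Fin.ext (by omega)
            subst this
            omega
          · exact absurd hw (adj_ll _ _ _ _)
        have g0 := hgl 0
        have g1 := hgl 1
        split_ifs at hr <;> omega
      have hcov : ∀ t < k, t ≠ r → t ∈ clq n c i := by
        intro t ht htr
        by_cases htj : t = j
        · rw [htj, ← hcj]; exact clq_k _ _ _ _
        obtain ⟨⟨i', (⟨⟩ | b | b)⟩, hw, rfl⟩ := hbj t ht htj
        · rw [adj_kc] at hw; subst hw; exact clq_c _ _ _
        · rw [adj_kk] at hw; obtain ⟨rfl, -⟩ := hw; exact clq_k _ _ _ _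
        · rw [adj_kl] at hw; obtain ⟨rfl, -⟩ := hw; exact absurd (hleaf b) htr
      have hr' : r ∉ clq n c i := by
        intro hr'
        refine clq_big n hn c i k hk fun t ht => ?_
        by_cases htr : t = r
        · rwa [htr]
        · exact hcov t ht htr
      have h1 : 1 < n - 1 := by omega
      have hd : c (i, Sum.inr (Sum.inl ⟨1, h1⟩)) ≠ j := by
        rw [← hcj]; apply hp; rw [adj_kk]; exact ⟨rfl, by intro h; rw [← h] at ha; simp at ha⟩
      have hdr : c (i, Sum.inr (Sum.inl ⟨1, h1⟩)) ≠ r := by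
        intro h; exact hr' (h ▸ clq_k _ _ _ _)
      obtain ⟨⟨i', (⟨⟩ | b | b)⟩, hw, hwr⟩ := hg (i, Sum.inr (Sum.inl ⟨1, h1⟩)) r
        (by split_ifs at hr <;> omega)
      · rw [adj_kc] at hw; subst hw; exact hr' (hwr ▸ clq_c _ _ _)
      · rw [adj_kk] at hw; obtain ⟨rfl, -⟩ := hw; exact hr' (hwr ▸ clq_k _ _ _ _)
      · rw [adj_kl] at hw; simp at hw
    · refine clq_big n hn c i k hk fun t ht => ?_
      by_cases htj : t = j
      · rw [htj, ← hcj]; exact clq_k _ _ _ _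
      obtain ⟨⟨i', (⟨⟩ | b | b)⟩, hw, rfl⟩ := hbj t ht htj
      · rw [adj_kc] at hw; subst hw; exact clq_c _ _ _
      · rw [adj_kk] at hw; obtain ⟨rfl, -⟩ := hw; exact clq_k _ _ _ _
      · rw [adj_kl] at hw; exact absurd hw.2 ha
  · rw [hv] at hcj hbj
    have key : ∀ t < k, t ≠ j → t = c (i, Sum.inr (Sum.inl ⟨0, hz⟩)) := by
      intro t ht htj
      obtain ⟨⟨i', (⟨⟩ | b | b)⟩, hw, rfl⟩ := hbj t ht htj
      · exact absurd hw (adj_lc _ _ _)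
      · rw [adj_lk] at hw
        obtain ⟨rfl, hb0⟩ := hw
        have : b = ⟨0, hz⟩ := Fin.ext (by simpa using hb0)
        rw [this]
      · exact absurd hw (adj_ll _ _ _ _)
    have k0 := key 0 (by omega)
    have k1 := key 1 (by omega)
    have k2 := key 2 (by omega)
    omega

/-- for every `n ≥ 3`, `z(Gₙ) = χ(Gₙ) = n`. -/
theorem zNum_Gn (n : ℕ) (hn : 3 ≤ n) :
    zNum (Gn n) = n ∧ chromNum (Gn n) = n := by
  constructor
  · refine IsGreatest.csSup_eq ⟨⟨zcol n, zcol_isZ n hn⟩, ?_⟩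
    rintro k ⟨c, hc⟩
    exact z_le n hn k c hc
  · refine IsLeast.csInf_eq ⟨?_, ?_⟩
    · exact ⟨SimpleGraph.Coloring.mk (fun v => (⟨zcol n v, zcol_lt n hn v⟩ : Fin n))
        (fun {x y} h hxy => zcol_proper n hn x y h (congrArg Fin.val hxy))⟩
    · rintro k ⟨C⟩
      have hinj : Function.Injective (fun i : Fin n => C (i, Sum.inl ())) := by
        intro i j hij
        by_contra hne
        exact C.valid ((adj_cc i j).2 hne) hij
      simpa using Fintype.card_le_of_injective _ hinj
end

section
/- Let T be a finite tree and v any vertex of T. Then z(T − v) ≤ z(T), where T − v is the graph obtained by deleting v (and its incident edges) from T. -/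
open SimpleGraph

universe u v

theorem zbdd {V : Type u} [Fintype V] (G : SimpleGraph V) :
    BddAbove {k | ∃ c : V → ℕ, IsZColoring G k c} := by
  refine ⟨Fintype.card V, ?_⟩
  rintro k ⟨c, -, -, -, -, u, hu, -, -⟩
  have : Function.Injective (fun i : Fin k => u i) := by
    intro i j h
    have h' : u i = u j := h
    have := congrArg c h'
    rw [hu _ i.2, hu _ j.2] at this
    exact Fin.ext this
  simpa using Fintype.card_le_of_injective _ this

theorem zextend {V : Type u} [Fintype V] (T : SimpleGraph V)
    (hT : T.IsTree) (v : V) (k : ℕ) (hk : 2 ≤ k) (c : {u : V | u ≠ v} → ℕ)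
    (hc : IsZColoring (T.induce {u : V | u ≠ v}) k c) (p : V → Bool)
    (hp : ∀ x y, T.Adj x y → p x ≠ p y) (hn : ∀ x, ∃ y, T.Adj x y) :
    ∃ d, IsZColoring T k d := by
  classical
  obtain ⟨hlt, hpr, -, hgr, u, hu1, hu2, hu3⟩ := hc
  set H := T.induce {u : V | u ≠ v} with hH
  set C : Set V := {x | ∃ h : x ≠ v, H.Reachable (u (k-1)) ⟨x, h⟩} with hC
  have hvC : v ∉ C := by rintro ⟨h, -⟩; exact h rfl
  have hout : ∀ x y, x ∈ C → y ∉ C → T.Adj x y → y = v := by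
    rintro x y ⟨hx, hr⟩ hy hxy
    by_contra hyv
    refine hy ⟨hyv, hr.trans (Adj.reachable ?_)⟩
    exact hxy
  have huniq : ∀ x y, x ∈ C → y ∈ C → T.Adj x v → T.Adj y v → x = y := by
    rintro x y ⟨hx, hrx⟩ ⟨hy, hry⟩ hxv hyv
    by_contra hne
    obtain ⟨q, hq⟩ := (hrx.symm.trans hry).exists_isPath
    let f : H ↪g T := Embedding.induce _
    let q1 : T.Path x y := ⟨q.map f.toHom, Walk.map_isPath_of_injective f.injective hq⟩
    let q2 : T.Path x y := ⟨Walk.cons hxv (Walk.cons hyv.symm Walk.nil), by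
      simp [Walk.isPath_def, hx, hne, hy.symm]⟩
    have h := hT.isAcyclic.path_unique q1 q2
    have hv : v ∈ q2.1.support := by simp [q2]
    rw [← h] at hv
    have key : v ∉ (q.map f.toHom).support := by
      rw [Walk.support_map, List.mem_map]
      rintro ⟨⟨z, hz⟩, -, hz2⟩
      exact hz hz2
    exact key hv
  let c' : V → ℕ := fun x => if h : x ≠ v then c ⟨x, h⟩ else 0
  have hc' : ∀ x (h : x ≠ v), c' x = c ⟨x, h⟩ := fun x h => dif_pos h
  let a : ℕ := if ∃ w ∈ C, T.Adj w v ∧ c' w = 0 then 1 else 0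
  have ha : a = 0 ∨ a = 1 := by simp only [a]; split_ifs <;> simp
  let d : V → ℕ := fun x => if x ∈ C then c' x else if p x = p v then a else 1 - a
  have hdC : ∀ x ∈ C, d x = c' x := fun x h => if_pos h
  have hdv : d v = a := by simp [d, hvC]
  have hdn : ∀ x, x ∉ C → d x = if p x = p v then a else 1 - a := fun x h => if_neg h
  have hbd : ∀ x ∈ C, T.Adj x v → d x ≠ a := by
    intro x hx hxv h
    rw [hdC x hx] at h
    by_cases he : ∃ w ∈ C, T.Adj w v ∧ c' w = 0
    · have : a = 1 := if_pos he
      obtain ⟨w, hw, hwv, hw0⟩ := he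
      obtain rfl := huniq x w hx hw hxv hwv
      omega
    · have : a = 0 := if_neg he
      exact he ⟨x, hx, hxv, by omega⟩
  have hnn : ∀ x y, x ∉ C → y ∉ C → T.Adj x y → d x + d y = 1 := by
    intro x y hx hy hxy
    have := hp x y hxy
    rw [hdn x hx, hdn y hy]
    generalize p x = b1 at *
    generalize p y = b2 at *
    generalize p v = b3 at *
    clear_value a
    clear * - this ha
    cases b1 <;> cases b2 <;> cases b3 <;> simp at this ⊢ <;> omega
  have huC : ∀ j, j < k → ((u j : V) ∈ C) := by
    intro j hj
    refine ⟨(u j).2, ?_⟩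
    by_cases h : j = k - 1
    · subst h; exact Reachable.refl _
    · exact (hu2 j (by omega)).reachable
  have hnb : ∀ (x w : {u : V | u ≠ v}), (x : V) ∈ C → H.Adj x w →
      T.Adj x w ∧ d w = c w := by
    rintro ⟨x, hx'⟩ ⟨w, hw'⟩ ⟨hx, hr⟩ hxw
    refine ⟨hxw, ?_⟩
    rw [hdC w ⟨hw', hr.trans hxw.reachable⟩, hc' w hw']
  have hdu : ∀ j, j < k → d (u j) = j := by
    intro j hj
    rw [hdC _ (huC j hj), hc' _ (u j).2]
    exact hu1 j hj
  refine ⟨d, ?_, ?_, ?_, ?_, fun j => u j, hdu, ?_, ?_⟩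
  · intro x
    by_cases hx : x ∈ C
    · rw [hdC x hx, hc' x hx.1]; exact hlt _
    · rw [hdn x hx]; split_ifs <;> omega
  · intro x y hxy
    by_cases hx : x ∈ C <;> by_cases hy : y ∈ C
    · rw [hdC x hx, hdC y hy, hc' x hx.1, hc' y hy.1]
      exact hpr (show H.Adj ⟨x, hx.1⟩ ⟨y, hy.1⟩ from hxy)
    · obtain rfl := hout x y hx hy hxy
      rw [hdv]; exact hbd x hx hxy
    · obtain rfl := hout y x hy hx hxy.symm
      rw [hdv]; exact (hbd y hy hxy.symm).symm
    · have := hnn x y hx hy hxy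
      omega
  · exact fun i hi => ⟨u i, hdu i hi⟩
  · intro x i hi
    by_cases hx : x ∈ C
    · rw [hdC x hx, hc' x hx.1] at hi
      obtain ⟨w, hw1, hw2⟩ := hgr _ _ hi
      obtain ⟨h1, h2⟩ := hnb ⟨x, hx.1⟩ w hx hw1
      exact ⟨w, h1, h2.trans hw2⟩
    · by_cases hxv : x = v
      · subst hxv
        rw [hdv] at hi
        by_cases he : ∃ w ∈ C, T.Adj w x ∧ c' w = 0
        · obtain ⟨w, hw, hwv, hw0⟩ := he
          exact ⟨w, hwv.symm, by rw [hdC w hw]; omega⟩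
        · have : a = 0 := if_neg he
          omega
      · obtain ⟨y, hy⟩ := hn x
        have hyC : y ∉ C := fun h => hxv (hout y x h hx hy.symm)
        have := hnn x y hx hyC hy
        exact ⟨y, hy, by omega⟩
  · exact fun j hj => hu2 j hj
  · intro i hi j hj hij
    obtain ⟨w, hw1, hw2⟩ := hu3 i hi j hj hij
    obtain ⟨h1, h2⟩ := hnb (u j) w (huC j hj) hw1
    exact ⟨w, h1, h2.trans hw2⟩

theorem ztwo {V : Type u} (T : SimpleGraph V) (v : V) (p : V → Bool)
    (hp : ∀ x y, T.Adj x y → p x ≠ p y) (hn : ∀ x, ∃ y, T.Adj x y) :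
    ∃ d, IsZColoring T 2 d := by
  obtain ⟨w, hw⟩ := hn v
  have hpv := hp v w hw
  let d : V → ℕ := fun x => if p x = p v then 1 else 0
  have hadj : ∀ x y, T.Adj x y → d x + d y = 1 := by
    intro x y h
    have := hp x y h
    simp only [d]
    cases h1 : p x <;> cases h2 : p y <;> cases h3 : p v <;> simp_all
  have hdv : d v = 1 := by simp [d]
  have hdw : d w = 0 := by have := hadj v w hw; omega
  let u : ℕ → V := fun j => if j = 0 then w else v
  have hu : ∀ j, j < 2 → d (u j) = j := by
    intro j hj
    interval_cases j <;> simp [u, hdv, hdw]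
  refine ⟨d, ?_, ?_, fun i hi => ⟨u i, hu i hi⟩, ?_, u, hu, ?_, ?_⟩
  · intro x; simp only [d]; split_ifs <;> omega
  · intro x y h; have := hadj x y h; omega
  · intro x i hi
    obtain ⟨y, hy⟩ := hn x
    have := hadj x y hy
    exact ⟨y, hy, by omega⟩
  · intro j hj
    obtain rfl : j = 0 := by omega
    simpa [u] using hw
  · intro i hi j hj hij
    obtain ⟨y, hy⟩ := hn (u j)
    have := hadj _ y hy
    have := hu j hj
    exact ⟨y, hy, by omega⟩

theorem zNum_deleteVert_le {V : Type u} [Fintype V] (T : SimpleGraph V)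
    (hT : T.IsTree) (v : V) :
    zNum (T.induce {u : V | u ≠ v}) ≤ zNum T := by
  refine csSup_le' ?_
  rintro k ⟨c, hc⟩
  have hc0 := hc
  obtain ⟨-, -, -, -, u, -⟩ := hc0
  have : Nontrivial V := ⟨⟨u 0, v, (u 0).2⟩⟩
  have hn : ∀ x, ∃ y, T.Adj x y := fun x =>
    hT.connected.preconnected.exists_adj_of_nontrivial x
  obtain ⟨p, hp⟩ : ∃ p : V → Bool, ∀ x y, T.Adj x y → p x ≠ p y := by
    refine ⟨fun x => decide (hT.coloringTwo x = 0), fun x y h => ?_⟩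
    have := (hT.coloringTwo).valid h
    simp only [ne_eq, decide_eq_decide]
    omega
  by_cases hk : 2 ≤ k
  · exact le_csSup (zbdd T) (zextend T hT v k hk c hc p hp hn)
  · exact le_trans (by omega) (le_csSup (zbdd T) (ztwo T v p hp hn))
end
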